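/- Characterization of strict pre-dissipativity with some quadratic storage function (Corollary 4.9): Assume there exists c_K > 0 such that ‖Ku‖ ≥ c_K‖Bu‖ for all u ∈ U, and let (x_e,u_e) be a controlled equilibrium. Then there exist a bounded self-adjoint operator P on H, w ∈ H and α of class 𝒦 such that 2Re⟨Ax + Bu, Px + w⟩ ≤ ℓ(x,u) − ℓ(x_e,u_e) − α(‖x − x_e‖) for all x ∈ dom A, u ∈ U, if and only if both of the following hold: (a) there exists w̃ ∈ dom A* with A*w̃ = z + C*C x_e and B*w̃ = v + K*K u_e; (b) there exist a bounded self-adjoint operator Q on H and m > 0 such that ‖Cx‖² − 2Re⟨Ax, Qx⟩ ≥ m‖x‖² for all x ∈ dom A. -/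

import Mathlib

open scoped InnerProductSpace
open RCLike ContinuousLinearMap

/-- A function of class `𝒦`: continuous, strictly increasing on `[0,∞)` with `α 0 = 0`. -/
def IsClassK (α : ℝ → ℝ) : Prop :=
  ContinuousOn α (Set.Ici 0) ∧ StrictMonoOn α (Set.Ici 0) ∧ α 0 = 0

/-- The generalized linear-quadratic stage cost
`ℓ(x,u) = ‖Cx‖² + ‖Ku‖² + 2Re⟨z,x⟩ + 2Re⟨v,u⟩`. -/
noncomputable def ell {𝕜 H U Y Z : Type*} [RCLike 𝕜]
    [NormedAddCommGroup H] [InnerProductSpace 𝕜 H]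
    [NormedAddCommGroup U] [InnerProductSpace 𝕜 U]
    [NormedAddCommGroup Y] [InnerProductSpace 𝕜 Y]
    [NormedAddCommGroup Z] [InnerProductSpace 𝕜 Z]
    (C : H →L[𝕜] Y) (K : U →L[𝕜] Z) (z : H) (v : U) (x : H) (u : U) : ℝ :=
  ‖C x‖ ^ 2 + ‖K u‖ ^ 2 + 2 * re ⟪z, x⟫_𝕜 + 2 * re ⟪v, u⟫_𝕜

lemma aux_ell {𝕜 H U Y Z : Type*} [RCLike 𝕜]
    [NormedAddCommGroup H] [InnerProductSpace 𝕜 H] [CompleteSpace H]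
    [NormedAddCommGroup U] [InnerProductSpace 𝕜 U] [CompleteSpace U]
    [NormedAddCommGroup Y] [InnerProductSpace 𝕜 Y] [CompleteSpace Y]
    [NormedAddCommGroup Z] [InnerProductSpace 𝕜 Z] [CompleteSpace Z]
    (C : H →L[𝕜] Y) (K : U →L[𝕜] Z) (z : H) (v : U) (xe h : H) (ue g : U) :
    ell C K z v (h + xe) (g + ue) - ell C K z v xe ue =
      ‖C h‖ ^ 2 + ‖K g‖ ^ 2 + 2 * re ⟪z + adjoint C (C xe), h⟫_𝕜
        + 2 * re ⟪v + adjoint K (K ue), g⟫_𝕜 := by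
  unfold ell
  simp only [map_add, inner_add_left, inner_add_right, adjoint_inner_left]
  rw [@norm_add_sq 𝕜, @norm_add_sq 𝕜, inner_re_symm (C h), inner_re_symm (K g)]
  ring

lemma aux_re_zero {𝕜 E : Type*} [RCLike 𝕜] [AddCommGroup E] [Module 𝕜 E]
    (f : E →ₗ[𝕜] 𝕜) (hf : ∀ x, re (f x) = 0) (x : E) : f x = 0 := by
  have h := hf ((starRingEnd 𝕜 (f x)) • x)
  rw [map_smul, smul_eq_mul, RCLike.conj_mul] at h
  have h2 : ‖f x‖ ^ 2 = 0 := by exact_mod_cast h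
  simpa using h2

lemma aux_quad (L q : ℝ) (h : ∀ t : ℝ, t * L ≤ t ^ 2 * q) : L = 0 := by
  have := discrim_le_zero (a := q) (b := -L) (c := 0) (fun t => by linarith [h t])
  unfold discrim at this
  nlinarith [sq_nonneg L]

/-- **Corollary 4.9**: strict pre-dissipativity at a controlled equilibrium
`(x_e, u_e)` with *some* quadratic storage function is equivalent to the algebraic
condition on `(z,v)` together with the Lyapunov-like form inequality. -/
theorem strict_predissipativity_some_quadratic_storage_iff
    {𝕜 H U Y Z : Type*} [RCLike 𝕜]
    [NormedAddCommGroup H] [InnerProductSpace 𝕜 H] [CompleteSpace H]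
    [NormedAddCommGroup U] [InnerProductSpace 𝕜 U] [CompleteSpace U]
    [NormedAddCommGroup Y] [InnerProductSpace 𝕜 Y] [CompleteSpace Y]
    [NormedAddCommGroup Z] [InnerProductSpace 𝕜 Z] [CompleteSpace Z]
    (A : H →ₗ.[𝕜] H) (hA : Dense (A.domain : Set H))
    (B : U →L[𝕜] H) (C : H →L[𝕜] Y) (K : U →L[𝕜] Z) (z : H) (v : U)
    (cK : ℝ) (hcK : 0 < cK) (hKB : ∀ u : U, cK * ‖B u‖ ≤ ‖K u‖)
    (xe : H) (ue : U) (hxe : xe ∈ A.domain) (heq : A ⟨xe, hxe⟩ + B ue = 0) :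
    (∃ P : H →L[𝕜] H, IsSelfAdjoint P ∧ ∃ w : H, ∃ α : ℝ → ℝ, IsClassK α ∧
      ∀ (x : A.domain) (u : U),
        2 * re ⟪A x + B u, P (x : H) + w⟫_𝕜 ≤
          ell C K z v (x : H) u - ell C K z v xe ue - α ‖(x : H) - xe‖)
    ↔
    ((∃ w' : H, ∃ hw' : w' ∈ A.adjoint.domain,
        A.adjoint ⟨w', hw'⟩ = z + adjoint C (C xe) ∧
        adjoint B w' = v + adjoint K (K ue)) ∧
      ∃ Q : H →L[𝕜] H, IsSelfAdjoint Q ∧ ∃ m : ℝ, 0 < m ∧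
        ∀ x : A.domain,
          m * ‖(x : H)‖ ^ 2 ≤ ‖C (x : H)‖ ^ 2 - 2 * re ⟪A x, Q (x : H)⟫_𝕜) := by
  -- shifted form of the inequality
  have key : ∀ (P : H →L[𝕜] H) (w : H) (α : ℝ → ℝ),
      (∀ (x : A.domain) (u : U),
        2 * re ⟪A x + B u, P (x : H) + w⟫_𝕜 ≤
          ell C K z v (x : H) u - ell C K z v xe ue - α ‖(x : H) - xe‖) ↔
      (∀ (h : A.domain) (g : U),
        2 * re ⟪A h + B g, P (h : H) + (P xe + w)⟫_𝕜 ≤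
          ‖C (h : H)‖ ^ 2 + ‖K g‖ ^ 2 + 2 * re ⟪z + adjoint C (C xe), (h : H)⟫_𝕜
        + 2 * re ⟪v + adjoint K (K ue), g⟫_𝕜 - α ‖(h : H)‖) := by
    intro P w α
    have e : ∀ (h : A.domain) (g : U), A (h + ⟨xe, hxe⟩) + B (g + ue) = A h + B g := by
      intro h g
      rw [LinearPMap.map_add, map_add, add_add_add_comm, heq, add_zero]
    constructor
    · intro H1 h g
      have := H1 (h + ⟨xe, hxe⟩) (g + ue)
      rw [e] at this
      simp only [Submodule.coe_add, aux_ell, add_sub_cancel_right, map_add P] at this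
      rwa [add_assoc] at this
    · intro H1 x u
      have := H1 (x - ⟨xe, hxe⟩) (u - ue)
      rw [← e, ← aux_ell] at this
      simp only [Submodule.coe_sub, sub_add_cancel, map_sub P] at this
      rwa [← add_assoc, sub_add_cancel] at this
  constructor
  · rintro ⟨P, hP, w, α, ⟨-, hmono, hα0⟩, H1⟩
    rw [key] at H1
    set w0 := P xe + w
    set z' := z + adjoint C (C xe)
    set v' := v + adjoint K (K ue)
    have hα : ∀ r, 0 ≤ r → 0 ≤ α r := fun r hr => by
      rw [← hα0]; exact hmono.monotoneOn (Set.mem_Ici.2 le_rfl) (Set.mem_Ici.2 hr) hr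
    have hh : ∀ h : A.domain, re (⟪w0, A h⟫_𝕜 - ⟪z', (h : H)⟫_𝕜) = 0 := by
      intro h
      apply aux_quad _ ((‖C (h : H)‖ ^ 2 - 2 * re ⟪A h, P (h : H)⟫_𝕜) / 2)
      intro t
      have h1 := H1 ((t : 𝕜) • h) 0
      have h2 := hα ‖(((t : 𝕜) • h : A.domain) : H)‖ (norm_nonneg _)
      simp only [LinearPMap.map_smul, map_zero, add_zero, Submodule.coe_smul, map_smul,
        inner_add_right, inner_smul_left, inner_smul_right, norm_smul, norm_zero, inner_zero_right,
        RCLike.conj_ofReal, RCLike.re_ofReal_mul, map_add, mul_pow, norm_ofReal, sq_abs] at h1 h2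
      rw [inner_re_symm (A h) w0] at h1
      simp only [map_sub]
      linarith
    have hg : ∀ g : U, re (⟪adjoint B w0 - v', g⟫_𝕜) = 0 := by
      intro g
      apply aux_quad _ (‖K g‖ ^ 2 / 2)
      intro t
      have h1 := H1 0 ((t : 𝕜) • g)
      simp only [LinearPMap.map_zero, map_zero, zero_add, Submodule.coe_zero, map_smul,
        inner_add_right, inner_smul_left, inner_smul_right, norm_smul, norm_zero, inner_zero_right,
        RCLike.conj_ofReal, RCLike.re_ofReal_mul, map_add, mul_pow, norm_ofReal, sq_abs, hα0] at h1
      rw [inner_re_symm (B g) w0] at h1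
      simp only [inner_sub_left, map_sub, adjoint_inner_left]
      linarith
    have hA' : ∀ h : A.domain, ⟪z', (h : H)⟫_𝕜 = ⟪w0, A h⟫_𝕜 := by
      intro h
      have := aux_re_zero ((innerₛₗ 𝕜 w0).comp A.toFun - (innerₛₗ 𝕜 z').comp A.domain.subtype)
        (fun x => hh x) h
      exact (sub_eq_zero.1 this).symm
    have hw0 : w0 ∈ A.adjoint.domain := LinearPMap.mem_adjoint_domain_of_exists _ ⟨z', hA'⟩
    have hB : adjoint B w0 = v' := by
      rw [← sub_eq_zero, ← inner_self_eq_zero (𝕜 := 𝕜)]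
      exact aux_re_zero (innerₛₗ 𝕜 (adjoint B w0 - v')) (fun x => hg x) _
    refine ⟨⟨w0, hw0, LinearPMap.adjoint_apply_eq hA _ hA', hB⟩, P, hP, α 1, ?_, ?_⟩
    · rw [← hα0]; exact hmono (Set.mem_Ici.2 le_rfl) (Set.mem_Ici.2 zero_le_one) zero_lt_one
    · intro x
      by_cases hx : (x : H) = 0
      · simp [hx]
      have hn : 0 < ‖(x : H)‖ := norm_pos_iff.2 hx
      have h1 := H1 (((‖(x : H)‖⁻¹ : ℝ) : 𝕜) • x) 0
      have h3 := hh x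
      simp only [LinearPMap.map_smul, map_zero, add_zero, Submodule.coe_smul, map_smul,
        inner_add_right, inner_smul_left, inner_smul_right, norm_smul, norm_zero, inner_zero_right,
        RCLike.conj_ofReal, RCLike.re_ofReal_mul, map_add, mul_pow, norm_ofReal, sq_abs,
        abs_inv, abs_norm, inv_mul_cancel₀ hn.ne'] at h1
      rw [inner_re_symm (A x) w0] at h1
      rw [map_sub, sub_eq_zero] at h3
      rw [h3] at h1
      have h4 : α 1 ≤ (‖(x : H)‖⁻¹) ^ 2 * (‖C (x : H)‖ ^ 2 - 2 * re ⟪A x, P (x : H)⟫_𝕜) := by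
        linarith
      calc α 1 * ‖(x : H)‖ ^ 2 ≤ ((‖(x : H)‖⁻¹) ^ 2 *
            (‖C (x : H)‖ ^ 2 - 2 * re ⟪A x, P (x : H)⟫_𝕜)) * ‖(x : H)‖ ^ 2 := by gcongr
        _ = _ := by field_simp
  · rintro ⟨⟨w', hw', hAw, hBw⟩, Q, hQ, m, hm, hQm⟩
    obtain ⟨ε, hε, hε1, hε2⟩ : ∃ ε : ℝ, 0 < ε ∧ ε ≤ 1 ∧ ε * (‖Q‖ / cK) ^ 2 ≤ m / 2 := by
      refine ⟨min 1 (m / 2 / ((‖Q‖ / cK) ^ 2 + 1)), by positivity, min_le_left _ _, ?_⟩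
      have hp : 0 < (‖Q‖ / cK) ^ 2 + 1 := by positivity
      calc _ ≤ (m / 2 / ((‖Q‖ / cK) ^ 2 + 1)) * ((‖Q‖ / cK) ^ 2 + 1) := by
            gcongr
            · exact min_le_right _ _
            · linarith
        _ = _ := by field_simp
    refine ⟨(ε : 𝕜) • Q, ?_, w' - ((ε : 𝕜) • Q) xe, fun r => ε * m / 2 * r ^ 2, ⟨?_, ?_, ?_⟩, ?_⟩
    · exact IsSelfAdjoint.smul (by simp [isSelfAdjoint_iff]) hQ
    · fun_prop
    · intro a ha b hb hab
      have ha' : 0 ≤ a := ha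
      have : a ^ 2 < b ^ 2 := by gcongr
      have : 0 < ε * m / 2 := by positivity
      simp only
      gcongr
    · simp
    · refine (key _ _ (fun r => ε * m / 2 * r ^ 2)).2 ?_
      intro h g
      rw [add_sub_cancel, ← hBw, ← hAw]
      have e1 := LinearPMap.adjoint_isFormalAdjoint hA ⟨w', hw'⟩ h
      rw [e1, adjoint_inner_left]
      simp only [ContinuousLinearMap.smul_apply, inner_add_left, inner_add_right, map_add,
        inner_smul_right, RCLike.re_ofReal_mul]
      rw [inner_re_symm (A h) w', inner_re_symm (B g) w']
      have h1 := hQm h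
      have h2 : re ⟪B g, Q (h : H)⟫_𝕜 ≤ ‖K g‖ * (‖Q‖ / cK * ‖(h : H)‖) := by
        calc re ⟪B g, Q (h : H)⟫_𝕜 ≤ ‖B g‖ * ‖Q (h : H)‖ := re_inner_le_norm _ _
          _ ≤ (‖K g‖ / cK) * (‖Q‖ * ‖(h : H)‖) := by
            gcongr
            · rw [le_div_iff₀ hcK, mul_comm]; exact hKB g
            · exact Q.le_opNorm _
          _ = _ := by ring
      have h3 := mul_le_mul_of_nonneg_left h2 hε.le
      have h4 := mul_le_mul_of_nonneg_left h1 hε.le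
      have h5 : ε * ‖C (h : H)‖ ^ 2 ≤ ‖C (h : H)‖ ^ 2 := by
        nlinarith [sq_nonneg ‖C (h : H)‖]
      have h6 := mul_le_mul_of_nonneg_left hε2 (mul_nonneg hε.le (sq_nonneg ‖(h : H)‖))
      have h7 := sq_nonneg (‖K g‖ - ε * (‖Q‖ / cK * ‖(h : H)‖))
      nlinarith
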